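/- Every light tournament has dichromatic number at most 8, i.e., its vertex set can be partitioned into at most eight transitive sets. -/

import Mathlib

/-- A tournament on a vertex type `V`: for every two distinct vertices exactly one
of the two possible arcs is present, and there are no loops. -/
structure Tournament (V : Type) where
  arc : V → V → Prop
  asymm : ∀ u v, arc u v → ¬ arc v u
  total : ∀ u v, u ≠ v → arc u v ∨ arc v u

namespace Tournament

variable {V : Type}

/-- A set of vertices is transitive (acyclic) if it contains no directed triangle. -/
def IsTransitiveSet (T : Tournament V) (S : Set V) : Prop :=
  ∀ a ∈ S, ∀ b ∈ S, ∀ c ∈ S, ¬ (T.arc a b ∧ T.arc b c ∧ T.arc c a)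

/-- Out-neighborhood `N⁺(v)`. -/
def outN (T : Tournament V) (v : V) : Set V := {w | T.arc v w}

/-- In-neighborhood `N⁻(v)`. -/
def inN (T : Tournament V) (v : V) : Set V := {w | T.arc w v}

/-- Arc neighborhood `N(uv)` of an arc `u → v`: vertices forming a directed
triangle with the arc. -/
def arcNbhd (T : Tournament V) (u v : V) : Set V := {w | T.arc v w ∧ T.arc w u}

/-- `T.ColorableOn S k` means the induced subtournament `T[S]` can be partitioned
into at most `k` transitive sets. -/
def ColorableOn (T : Tournament V) (S : Set V) (k : ℕ) : Prop :=
  ∃ f : V → ℕ, (∀ v ∈ S, f v < k) ∧ ∀ i : ℕ, T.IsTransitiveSet {v | v ∈ S ∧ f v = i}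

/-- The dichromatic number of `T`: the least `k` such that `V(T)` can be
partitioned into `k` transitive sets. -/
noncomputable def dichromaticNumber (T : Tournament V) : ℕ :=
  sInf {k | T.ColorableOn Set.univ k}

/-- An arc `u → v` is heavy if `N(uv)` contains a directed triangle. -/
def IsHeavy (T : Tournament V) (u v : V) : Prop :=
  T.arc u v ∧ ∃ a b c,
    a ∈ T.arcNbhd u v ∧ b ∈ T.arcNbhd u v ∧ c ∈ T.arcNbhd u v ∧
    T.arc a b ∧ T.arc b c ∧ T.arc c a

/-- A tournament is light if it has no heavy arc. -/
def IsLight (T : Tournament V) : Prop := ∀ u v, ¬ T.IsHeavy u v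

/-- The induced subtournament `T[S]` is light: for every arc within `S`, the part
of its arc neighborhood inside `S` is transitive. -/
def LightOn (T : Tournament V) (S : Set V) : Prop :=
  ∀ u ∈ S, ∀ v ∈ S, T.arc u v → T.IsTransitiveSet (T.arcNbhd u v ∩ S)

/-- `S` is the vertex set of a directed triangle. -/
def IsTriangle (T : Tournament V) (S : Set V) : Prop :=
  ∃ a b c, S = {a, b, c} ∧ T.arc a b ∧ T.arc b c ∧ T.arc c a

/-- `S ⇒ U`: every arc between `S` and `U` is directed from `S` to `U`. -/
def Beats (T : Tournament V) (S U : Set V) : Prop :=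
  ∀ s ∈ S, ∀ u ∈ U, T.arc s u

/-- `X 0, …, X (L-1)` is a `C₃`-chain of length `L`: pairwise vertex-disjoint
directed triangles with `X i ⇒ X (i+1)`. -/
def IsC3Chain (T : Tournament V) (X : ℕ → Set V) (L : ℕ) : Prop :=
  (∀ i < L, T.IsTriangle (X i)) ∧
  (∀ i < L, ∀ j < L, i ≠ j → Disjoint (X i) (X j)) ∧
  (∀ i, i + 1 < L → T.Beats (X i) (X (i + 1)))

/-- `v 0, …, v k` are the vertices of a shortest directed path from `v 0` to `v k`:
consecutive arcs are present, and no directed path (walk) from `v 0` to `v k`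
has fewer than `k` arcs. -/
def IsShortestPath (T : Tournament V) (v : ℕ → V) (k : ℕ) : Prop :=
  (∀ i < k, T.arc (v i) (v (i + 1))) ∧
  (∀ m : ℕ, ∀ p : ℕ → V, p 0 = v 0 → p m = v k →
    (∀ i < m, T.arc (p i) (p (i + 1))) → k ≤ m)

/-- The path decomposition `D 0, …, D (k+1)` associated to the path `v 0, …, v k`:
`D 0 = N⁺(v 0)`, `D i = N(e i) \ (D 0 ∪ ⋯ ∪ D (i-1))` for `1 ≤ i ≤ k` where
`e i` is the arc `v (i-1) → v i`, and `D (k+1) = N⁻(v k) \ (D 0 ∪ ⋯ ∪ D k)`. -/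
def PathDecomp (T : Tournament V) (v : ℕ → V) (k : ℕ) (D : ℕ → Set V) : Prop :=
  D 0 = T.outN (v 0) ∧
  (∀ i, 1 ≤ i → i ≤ k → D i = T.arcNbhd (v (i - 1)) (v i) \ ⋃ j < i, D j) ∧
  D (k + 1) = T.inN (v k) \ ⋃ j < k + 1, D j

end Tournament

/-!
The tournament can be coloured one strong component at a time, so assume it is strongly connected.

In a light tournament the common in-neighbours of a directed triangle beat its common
out-neighbours. So passing from a triangle `X` to a triangle inside the common out-neighbourhood
of `X` shrinks that neighbourhood, and in a finite tournament some triangle `X` has a transitive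
common out-neighbourhood `P`. Dually, some triangle `Y` has a transitive common in-neighbourhood
`Q`. The vertices which are neither common in-neighbours nor common out-neighbours of a triangle
lie in the three transitive neighbourhoods of its arcs.

If there is an arc `p → q` from `P` to `Q`, the vertices outside `P`, `Q` and the six arc
neighbourhoods lie in `N(pq)` and beat `P`, so they can share a colour with `P`: this takes
`1 + 1 + 3 + 3` colours.

Otherwise take a shortest path from a vertex `a` of `X` to a vertex `b` of `Y`. The closed
out-neighbourhood of `a`, the in-neighbourhood of `b` and the neighbourhoods of the arcs of the
path cover all vertices. If the path has at most three arcs, `P ∪ Q` is transitive, which gives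
`1 + 2 + 2 + 3` colours. If it is longer, no arc leads from the first end to the second, so the two
ends share `3` colours. Moreover an arc from the `i`-th to the `j`-th arc neighbourhood forces
`j ≤ i + 4`, so colouring these by their index modulo `5` is proper: this takes `3 + 5` colours.
-/

namespace Tournament

variable {V : Type} {T : Tournament V} {S A B X Y : Set V} {k l : ℕ}

section Basic

theorem arc_irrefl (T : Tournament V) (v : V) : ¬ T.arc v v :=
  fun h => T.asymm v v h h

theorem arc_of_ne_of_not_arc {u v : V} (hne : u ≠ v) (h : ¬ T.arc u v) : T.arc v u :=
  (T.total u v hne).resolve_left h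

theorem not_isTransitiveSet_iff : ¬ T.IsTransitiveSet S ↔ ∃ X ⊆ S, T.IsTriangle X := by
  constructor
  · intro h
    unfold IsTransitiveSet at h
    push Not at h
    obtain ⟨a, ha, b, hb, c, hc, habc⟩ := h
    exact ⟨{a, b, c}, by simp [Set.insert_subset_iff, ha, hb, hc], a, b, c, rfl, habc⟩
  · rintro ⟨_, hXS, a, b, c, rfl, habc⟩ h
    exact h a (hXS (by simp)) b (hXS (by simp)) c (hXS (by simp)) habc

theorem Beats.not_arc (h : T.Beats A B) : ∀ b ∈ B, ∀ a ∈ A, ¬ T.arc b a :=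
  fun b hb a ha => T.asymm a b (h a ha b hb)

theorem IsLight.isTransitiveSet_arcNbhd (hT : T.IsLight) {u v : V} (huv : T.arc u v) :
    T.IsTransitiveSet (T.arcNbhd u v) :=
  fun a ha b hb c hc habc => hT u v ⟨huv, a, b, c, ha, hb, hc, habc⟩

end Basic

section Coloring

theorem ColorableOn.mono (h : T.ColorableOn B k) (hAB : A ⊆ B) (hkl : k ≤ l) :
    T.ColorableOn A l := by
  obtain ⟨f, hfk, hf⟩ := h
  exact ⟨f, fun v hv => (hfk v (hAB hv)).trans_le hkl, fun i a ha b hb c hc =>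
    hf i a ⟨hAB ha.1, ha.2⟩ b ⟨hAB hb.1, hb.2⟩ c ⟨hAB hc.1, hc.2⟩⟩

theorem IsTransitiveSet.colorableOn_one (h : T.IsTransitiveSet S) : T.ColorableOn S 1 :=
  ⟨fun _ => 0, fun _ _ => one_pos, fun _ a ha b hb c hc => h a ha.1 b hb.1 c hc.1⟩

theorem ColorableOn.union (hA : T.ColorableOn A k) (hB : T.ColorableOn B l) :
    T.ColorableOn (A ∪ B) (k + l) := by
  classical
  obtain ⟨f, hfk, hf⟩ := hA
  obtain ⟨g, hgl, hg⟩ := hB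
  refine ⟨fun v => if v ∈ A then f v else k + g v, fun v hv => ?_, ?_⟩
  · grind
  · rintro i x ⟨hx, hxi⟩ y ⟨hy, hyi⟩ z ⟨hz, hzi⟩
    by_cases hik : i < k
    · exact hf i x (by grind) y (by grind) z (by grind)
    · exact hg (i - k) x (by grind) y (by grind) z (by grind)

theorem ColorableOn.union_of_not_arc (hA : T.ColorableOn A k) (hB : T.ColorableOn B k)
    (hAB : ∀ a ∈ A, ∀ b ∈ B, ¬ T.arc a b) : T.ColorableOn (A ∪ B) k := by
  classical
  obtain ⟨f, hfk, hf⟩ := hA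
  obtain ⟨g, hgk, hg⟩ := hB
  refine ⟨fun v => if v ∈ A then f v else g v, fun v hv => ?_, ?_⟩
  · grind
  · rintro i x ⟨hx, hxi⟩ y ⟨hy, hyi⟩ z ⟨hz, hzi⟩ ⟨hxy, hyz, hzx⟩
    by_cases hxA : x ∈ A
    · exact hf i x (by grind) y (by grind) z (by grind) ⟨hxy, hyz, hzx⟩
    · exact hg i x (by grind) y (by grind) z (by grind) ⟨hxy, hyz, hzx⟩

theorem colorableOn_biUnion {S : ℕ → Set V} {color : ℕ → ℕ}
    (hS : ∀ i < k, T.IsTransitiveSet (S i)) (hcolor : ∀ i < k, color i < l)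
    (hback : ∀ i j, i < j → j < k → color i = color j → ∀ x ∈ S i, ∀ y ∈ S j, ¬ T.arc x y) :
    T.ColorableOn (⋃ i < k, S i) l := by
  have hindex : ∀ v ∈ ⋃ i < k, S i, ∃ i, i < k ∧ v ∈ S i := by simp
  choose! index hindex using hindex
  refine ⟨fun v => color (index v), fun v hv => hcolor _ (hindex v hv).1, ?_⟩
  rintro c x ⟨hx, hxc⟩ y ⟨hy, hyc⟩ z ⟨hz, hzc⟩ ⟨hxy, hyz, hzx⟩
  have index_le : ∀ u ∈ ⋃ i < k, S i, ∀ w ∈ ⋃ i < k, S i, color (index u) = color (index w) →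
      T.arc u w → index w ≤ index u := fun u hu w hw hc huw => not_lt.mp fun hlt =>
    hback _ _ hlt (hindex w hw).1 hc u (hindex u hu).2 w (hindex w hw).2 huw
  have hyx := index_le x hx y hy (hxc.trans hyc.symm) hxy
  have hzy := index_le y hy z hz (hyc.trans hzc.symm) hyz
  have hxz := index_le z hz x hx (hzc.trans hxc.symm) hzx
  have hyx' : index y = index x := by lia
  have hzx' : index z = index x := by lia
  exact hS _ (hindex x hx).1 x (hindex x hx).2 y (hyx' ▸ (hindex y hy).2)
    z (hzx' ▸ (hindex z hz).2) ⟨hxy, hyz, hzx⟩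

end Coloring

section StrongComponents

/-- The subtournament `T[S]` induced on a set `S` of vertices, as a tournament on the subtype. -/
def induce (T : Tournament V) (S : Set V) : Tournament S where
  arc u v := T.arc u v
  asymm u v := T.asymm u v
  total u v huv := T.total u v (Subtype.coe_ne_coe.mpr huv)

/-- Strong connectedness: every vertex can be reached from every vertex along arcs. -/
def IsStrong (T : Tournament V) : Prop :=
  ∀ u v, Relation.ReflTransGen T.arc u v

theorem IsLight.induce (hT : T.IsLight) (S : Set V) : (T.induce S).IsLight :=
  fun u v ⟨huv, a, b, c, habc⟩ => hT u v ⟨huv, a, b, c, habc⟩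

theorem ColorableOn.of_induce (h : (T.induce S).ColorableOn Set.univ k) : T.ColorableOn S k := by
  obtain ⟨f, hfk, hf⟩ := h
  have hext (v : S) : Function.extend Subtype.val f 0 v = f v :=
    Subtype.val_injective.extend_apply f 0 v
  refine ⟨Function.extend Subtype.val f 0, fun v hv => ?_, ?_⟩
  · simpa only [hext ⟨v, hv⟩] using hfk ⟨v, hv⟩ trivial
  · rintro i x ⟨hx, hxi⟩ y ⟨hy, hyi⟩ z ⟨hz, hzi⟩
    exact hf i ⟨x, hx⟩ ⟨trivial, hext ⟨x, hx⟩ ▸ hxi⟩ ⟨y, hy⟩ ⟨trivial, hext ⟨y, hy⟩ ▸ hyi⟩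
      ⟨z, hz⟩ ⟨trivial, hext ⟨z, hz⟩ ▸ hzi⟩

theorem exists_beats_compl_of_not_isStrong (h : ¬ T.IsStrong) :
    ∃ A : Set V, A.Nonempty ∧ Aᶜ.Nonempty ∧ T.Beats Aᶜ A := by
  unfold IsStrong at h
  push Not at h
  obtain ⟨u, v, huv⟩ := h
  refine ⟨{w | Relation.ReflTransGen T.arc u w}, ⟨u, .refl⟩, ⟨v, huv⟩, fun y hy x hx => ?_⟩
  exact arc_of_ne_of_not_arc (fun hxy => hy (hxy ▸ hx)) fun hxy => hy (hx.tail hxy)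

theorem colorableOn_of_forall_induce_isStrong [Finite V]
    (h : ∀ S : Set V, (T.induce S).IsStrong → (T.induce S).ColorableOn Set.univ k) (S : Set V) :
    T.ColorableOn S k := by
  induction S using WellFoundedLT.induction with | ind S ih
  by_cases hS : (T.induce S).IsStrong
  · exact (h S hS).of_induce
  obtain ⟨A, ⟨u, hu⟩, ⟨v, hv⟩, hA⟩ := exists_beats_compl_of_not_isStrong hS
  have hlt_image {B : Set S} {w : S} (hw : w ∉ B) : Subtype.val '' B < S :=
    ⟨Subtype.coe_image_subset S B, fun hSB =>
      hw ((Subtype.val_injective.mem_set_image).mp (hSB w.2))⟩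
  have hunion : S = Subtype.val '' A ∪ Subtype.val '' Aᶜ := by
    rw [← Set.image_union, Set.union_compl_self, Subtype.coe_image_univ]
  rw [hunion]
  refine (ih _ (hlt_image hv)).union_of_not_arc (ih _ (hlt_image (not_not.mpr hu))) ?_
  rintro _ ⟨x, hx, rfl⟩ _ ⟨y, hy, rfl⟩
  exact hA.not_arc x hx y hy

end StrongComponents

section Reverse

/-- The tournament with all arcs reversed, used to dualize statements about triangles. -/
def reverse (T : Tournament V) : Tournament V where
  arc u v := T.arc v u
  asymm u v := T.asymm v u
  total u v huv := T.total v u huv.symm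

theorem IsTriangle.reverse (h : T.IsTriangle X) : T.reverse.IsTriangle X := by
  obtain ⟨a, b, c, rfl, hab, hbc, hca⟩ := h
  exact ⟨c, b, a, by grind, hbc, hab, hca⟩

theorem isTransitiveSet_reverse : T.reverse.IsTransitiveSet S ↔ T.IsTransitiveSet S :=
  ⟨fun h a ha b hb c hc ⟨hab, hbc, hca⟩ => h c hc b hb a ha ⟨hbc, hab, hca⟩,
    fun h a ha b hb c hc ⟨hab, hbc, hca⟩ => h c hc b hb a ha ⟨hbc, hab, hca⟩⟩

theorem ColorableOn.of_reverse (h : T.reverse.ColorableOn S k) : T.ColorableOn S k := by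
  obtain ⟨f, hfk, hf⟩ := h
  exact ⟨f, hfk, fun i => isTransitiveSet_reverse.mp (hf i)⟩

theorem IsLight.reverse (hT : T.IsLight) : T.reverse.IsLight := by
  rintro u v ⟨huv, a, b, c, ha, hb, hc, hab, hbc, hca⟩
  exact hT v u ⟨huv, c, b, a, hc.symm, hb.symm, ha.symm, hbc, hab, hca⟩

end Reverse

section Triangles

/-- The common out-neighbourhood of a set of vertices. -/
def commonOut (T : Tournament V) (X : Set V) : Set V := {w | ∀ x ∈ X, T.arc x w}

/-- The common in-neighbourhood of a set of vertices. -/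
def commonIn (T : Tournament V) (X : Set V) : Set V := {w | ∀ x ∈ X, T.arc w x}

theorem IsLight.commonIn_beats_commonOut (hT : T.IsLight) (hX : T.IsTriangle X) :
    T.Beats (T.commonIn X) (T.commonOut X) := by
  obtain ⟨a, b, c, rfl, habc⟩ := hX
  intro u hu v hv
  refine arc_of_ne_of_not_arc ?_ fun hvu => hT v u ⟨hvu, a, b, c,
    ⟨hu a (by simp), hv a (by simp)⟩, ⟨hu b (by simp), hv b (by simp)⟩,
    ⟨hu c (by simp), hv c (by simp)⟩, habc⟩
  rintro rfl
  exact T.asymm _ _ (hu a (by simp)) (hv a (by simp))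

theorem IsTriangle.nonempty (hX : T.IsTriangle X) : X.Nonempty := by
  obtain ⟨a, b, c, rfl, -⟩ := hX
  exact ⟨a, by simp⟩

theorem IsTriangle.exists_eq_of_mem (hX : T.IsTriangle X) {a : V} (ha : a ∈ X) :
    ∃ b c, X = {a, b, c} ∧ T.arc a b ∧ T.arc b c ∧ T.arc c a := by
  obtain ⟨x, y, z, rfl, hxy, hyz, hzx⟩ := hX
  rcases ha with rfl | rfl | rfl
  · exact ⟨y, z, rfl, hxy, hyz, hzx⟩
  · exact ⟨z, x, by grind, hyz, hzx, hxy⟩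
  · exact ⟨x, y, by grind, hzx, hxy, hyz⟩

theorem IsLight.commonOut_ssubset_commonOut (hT : T.IsLight) (hY : T.IsTriangle Y)
    (hYX : Y ⊆ T.commonOut X) : T.commonOut Y ⊂ T.commonOut X := by
  obtain ⟨y, hy⟩ := hY.nonempty
  refine ⟨fun w hw x hx => ?_, fun hsub => T.arc_irrefl y (hsub (hYX hy) y hy)⟩
  exact hT.commonIn_beats_commonOut hY x (fun z hz => hYX hz x hx) w hw

theorem IsLight.exists_isTriangle_isTransitiveSet_commonOut [Finite V] (hT : T.IsLight)
    (hX : T.IsTriangle X) : ∃ Y, T.IsTriangle Y ∧ T.IsTransitiveSet (T.commonOut Y) := by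
  obtain ⟨Y, hY⟩ := (Set.toFinite {Y | T.IsTriangle Y}).exists_minimalFor T.commonOut _ ⟨X, hX⟩
  refine ⟨Y, hY.prop, by_contra fun htrans => ?_⟩
  obtain ⟨Z, hZY, hZ⟩ := not_isTransitiveSet_iff.mp htrans
  have hlt := hT.commonOut_ssubset_commonOut hZ hZY
  exact hlt.not_subset (hY.le_of_le hZ hlt.subset)

theorem IsLight.exists_isTriangle_isTransitiveSet_commonIn [Finite V] (hT : T.IsLight)
    (hX : T.IsTriangle X) : ∃ Y, T.IsTriangle Y ∧ T.IsTransitiveSet (T.commonIn Y) := by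
  obtain ⟨Y, hY, htrans⟩ :=
    hT.reverse.exists_isTriangle_isTransitiveSet_commonOut hX.reverse
  exact ⟨Y, hY.reverse, isTransitiveSet_reverse.mp htrans⟩

theorem mem_commonOut_or_commonIn_or_arcNbhd {a b c : V} (hab : T.arc a b) (hbc : T.arc b c)
    (hca : T.arc c a) (w : V) :
    w ∈ T.commonOut {a, b, c} ∨ w ∈ T.commonIn {a, b, c} ∨
      w ∈ T.arcNbhd a b ∨ w ∈ T.arcNbhd b c ∨ w ∈ T.arcNbhd c a := by
  have ha := T.total a w
  have hb := T.total b w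
  have hc := T.total c w
  simp only [commonOut, commonIn, arcNbhd, Set.mem_insert_iff, Set.mem_singleton_iff,
    forall_eq_or_imp, forall_eq, Set.mem_ofPred_eq]
  grind

theorem IsLight.colorableOn_compl_commonOut_union_commonIn (hT : T.IsLight)
    (hX : T.IsTriangle X) : T.ColorableOn (T.commonOut X ∪ T.commonIn X)ᶜ 3 := by
  obtain ⟨a, b, c, rfl, hab, hbc, hca⟩ := hX
  have hcolor := ((hT.isTransitiveSet_arcNbhd hab).colorableOn_one.union
    (hT.isTransitiveSet_arcNbhd hbc).colorableOn_one).union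
    (hT.isTransitiveSet_arcNbhd hca).colorableOn_one
  refine hcolor.mono (fun w hw => ?_) le_rfl
  have := mem_commonOut_or_commonIn_or_arcNbhd hab hbc hca w
  grind

theorem IsLight.colorableOn_compl_inN_diff_commonOut (hT : T.IsLight) (hX : T.IsTriangle X)
    {a : V} (ha : a ∈ X) : T.ColorableOn ((T.inN a)ᶜ \ T.commonOut X) 2 := by
  obtain ⟨b, c, rfl, hab, hbc, hca⟩ := hX.exists_eq_of_mem ha
  have hcolor := (hT.isTransitiveSet_arcNbhd hbc).colorableOn_one.union
    (hT.isTransitiveSet_arcNbhd hca).colorableOn_one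
  refine hcolor.mono (fun w hw => ?_) le_rfl
  have hwa : ¬ T.arc w a := hw.1
  rcases mem_commonOut_or_commonIn_or_arcNbhd hab hbc hca w with h | h | h | h | h
  · exact absurd h hw.2
  · exact absurd (h a ha) hwa
  · exact absurd h.2 hwa
  · exact .inl h
  · exact .inr h

theorem IsLight.colorableOn_compl_outN_diff_commonIn (hT : T.IsLight) (hX : T.IsTriangle X)
    {a : V} (ha : a ∈ X) : T.ColorableOn ((T.outN a)ᶜ \ T.commonIn X) 2 :=
  (hT.reverse.colorableOn_compl_inN_diff_commonOut hX.reverse ha).of_reverse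

end Triangles

section ShortestPaths

variable {u v w : V} {m n : ℕ} {p : ℕ → V}

/-- There is a directed walk with `n` arcs from `u` to `v`. -/
def HasWalk (T : Tournament V) (n : ℕ) (u v : V) : Prop :=
  ∃ p : ℕ → V, p 0 = u ∧ p n = v ∧ ∀ i < n, T.arc (p i) (p (i + 1))

theorem HasWalk.refl (v : V) : T.HasWalk 0 v v :=
  ⟨fun _ => v, rfl, rfl, by simp⟩

theorem HasWalk.of_arc (h : T.arc u v) : T.HasWalk 1 u v :=
  ⟨fun i => if i = 0 then u else v, by simp, by simp, by simpa using h⟩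

theorem HasWalk.trans (huv : T.HasWalk m u v) (hvw : T.HasWalk n v w) :
    T.HasWalk (m + n) u w := by
  obtain ⟨p, rfl, hpm, hp⟩ := huv
  obtain ⟨q, hq0, rfl, hq⟩ := hvw
  refine ⟨fun i => if i < m then p i else q (i - m), ?_, by simp, fun i hi => ?_⟩
  · grind
  · rcases lt_trichotomy (i + 1) m with him | him | him
    · have := hp i (by lia)
      grind
    · have := hp i (by lia)
      grind
    · have := hq (i - m) (by lia)
      grind

theorem exists_hasWalk_of_reflTransGen (h : Relation.ReflTransGen T.arc u v) :
    ∃ n, T.HasWalk n u v := by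
  induction h with
  | refl => exact ⟨0, .refl u⟩
  | tail _ harc ih =>
    obtain ⟨n, hn⟩ := ih
    exact ⟨n + 1, hn.trans (.of_arc harc)⟩

theorem exists_isShortestPath_of_reflTransGen (h : Relation.ReflTransGen T.arc u v) :
    ∃ k p, p 0 = u ∧ p k = v ∧ T.IsShortestPath p k := by
  classical
  have hex := exists_hasWalk_of_reflTransGen h
  obtain ⟨p, rfl, hpk, hp⟩ := Nat.find_spec hex
  exact ⟨Nat.find hex, p, rfl, hpk, hp, fun m q hq0 hqm hq =>
    Nat.find_min' hex ⟨q, hq0, hqm.trans hpk, hq⟩⟩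

theorem IsShortestPath.le_add_of_hasWalk (hp : T.IsShortestPath p k) {i j : ℕ} (hi : i ≤ k)
    (hj : j ≤ k) (h : T.HasWalk n (p i) (p j)) : j ≤ i + n := by
  have hprefix : T.HasWalk i (p 0) (p i) := ⟨p, rfl, rfl, fun t ht => hp.1 t (by lia)⟩
  have hsuffix : T.HasWalk (k - j) (p j) (p k) :=
    ⟨fun t => p (j + t), rfl, by grind, fun t ht => hp.1 (j + t) (by lia)⟩
  obtain ⟨q, hq0, hqk, hq⟩ := (hprefix.trans h).trans hsuffix
  have := hp.2 _ q hq0 hqk hq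
  lia

theorem inN_subset_biUnion_arcNbhd_union_inN (hp : ∀ i < k, T.arc (p i) (p (i + 1))) :
    T.inN (p 0) ⊆ (⋃ i < k, T.arcNbhd (p i) (p (i + 1))) ∪ T.inN (p k) := by
  induction k with
  | zero => exact Set.subset_union_right
  | succ k ih =>
    have hstep : T.inN (p k) ⊆ T.arcNbhd (p k) (p (k + 1)) ∪ T.inN (p (k + 1)) := by
      intro w (hw : T.arc w (p k))
      by_cases hwk : T.arc w (p (k + 1))
      · exact .inr hwk
      · refine .inl ⟨arc_of_ne_of_not_arc ?_ hwk, hw⟩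
        rintro rfl
        exact T.asymm _ _ hw (hp k k.lt_succ_self)
    rw [Set.biUnion_lt_succ, Set.union_assoc]
    exact (ih fun i hi => hp i (by lia)).trans (Set.union_subset_union_right _ hstep)

theorem IsLight.colorableOn_biUnion_arcNbhd (hT : T.IsLight)
    (hp : ∀ i < k, T.arc (p i) (p (i + 1))) :
    T.ColorableOn (⋃ i < k, T.arcNbhd (p i) (p (i + 1))) k :=
  colorableOn_biUnion (color := id) (fun i hi => hT.isTransitiveSet_arcNbhd (hp i hi))
    (fun _ hi => hi) fun _ _ hij _ heq => absurd heq hij.ne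

theorem IsLight.colorableOn_biUnion_arcNbhd_five (hT : T.IsLight) (hp : T.IsShortestPath p k) :
    T.ColorableOn (⋃ i < k, T.arcNbhd (p i) (p (i + 1))) 5 := by
  refine colorableOn_biUnion (color := (· % 5))
    (fun i hi => hT.isTransitiveSet_arcNbhd (hp.1 i hi)) (fun i _ => i.mod_lt (by simp)) ?_
  intro i j hij hjk hmod x hx y hy hxy
  have hwalk : T.HasWalk 3 (p (i + 1)) (p j) :=
    ((HasWalk.of_arc hx.1).trans (.of_arc hxy)).trans (.of_arc hy.2)
  have := hp.le_add_of_hasWalk (by lia) hjk.le hwalk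
  lia

theorem IsShortestPath.not_arc_of_three_lt (hp : T.IsShortestPath p k) (hk : 3 < k) :
    ∀ x ∈ (T.inN (p 0))ᶜ, ∀ y ∈ T.inN (p k), ¬ T.arc x y := by
  intro x hx y hy hxy
  have hwalk : T.HasWalk 2 x (p k) := (HasWalk.of_arc hxy).trans (.of_arc hy)
  rcases eq_or_ne x (p 0) with rfl | hne
  · have := hp.le_add_of_hasWalk (Nat.zero_le k) le_rfl hwalk
    lia
  · have := hp.le_add_of_hasWalk (Nat.zero_le k) le_rfl
      ((HasWalk.of_arc (arc_of_ne_of_not_arc hne hx)).trans hwalk)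
    lia

end ShortestPaths

section EightColoring

variable {p : ℕ → V}

theorem IsLight.colorableOn_univ_of_arc_commonOut_commonIn (hT : T.IsLight)
    (hX : T.IsTriangle X) (hY : T.IsTriangle Y) (hXout : T.IsTransitiveSet (T.commonOut X))
    (hYin : T.IsTransitiveSet (T.commonIn Y)) {u v : V} (hu : u ∈ T.commonOut X)
    (hv : v ∈ T.commonIn Y) (huv : T.arc u v) : T.ColorableOn Set.univ 8 := by
  have hXbeats := hT.commonIn_beats_commonOut hX
  have hYbeats := hT.commonIn_beats_commonOut hY
  have hsubset : T.commonIn X ∩ T.commonOut Y ⊆ T.arcNbhd u v :=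
    fun w hw => ⟨hYbeats v hv w hw.2, hXbeats w hw.1 u hu⟩
  have hinter : T.ColorableOn (T.commonIn X ∩ T.commonOut Y) 1 :=
    (hT.isTransitiveSet_arcNbhd huv).colorableOn_one.mono hsubset le_rfl
  have hone : T.ColorableOn (T.commonOut X ∪ T.commonIn X ∩ T.commonOut Y) 1 :=
    hXout.colorableOn_one.union_of_not_arc hinter
      fun x hx y hy => hXbeats.not_arc x hx y hy.1
  have hcolor := ((hone.union hYin.colorableOn_one).union
    (hT.colorableOn_compl_commonOut_union_commonIn hX)).union
    (hT.colorableOn_compl_commonOut_union_commonIn hY)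
  exact hcolor.mono (by intro w _; grind) le_rfl

theorem IsLight.colorableOn_univ_of_length_le_three (hT : T.IsLight) (hX : T.IsTriangle X)
    (hY : T.IsTriangle Y) (hXout : T.IsTransitiveSet (T.commonOut X))
    (hYin : T.IsTransitiveSet (T.commonIn Y))
    (hXY : ∀ x ∈ T.commonOut X, ∀ y ∈ T.commonIn Y, ¬ T.arc x y)
    (hp : ∀ i < k, T.arc (p i) (p (i + 1))) (hk : k ≤ 3) (hpX : p 0 ∈ X) (hpY : p k ∈ Y) :
    T.ColorableOn Set.univ 8 := by
  have hone : T.ColorableOn (T.commonOut X ∪ T.commonIn Y) 1 :=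
    hXout.colorableOn_one.union_of_not_arc hYin.colorableOn_one hXY
  have hcolor := ((hone.union (hT.colorableOn_compl_inN_diff_commonOut hX hpX)).union
    (hT.colorableOn_compl_outN_diff_commonIn hY hpY)).union (hT.colorableOn_biUnion_arcNbhd hp)
  refine hcolor.mono (fun w _ => ?_) (by lia)
  have hcover := @inN_subset_biUnion_arcNbhd_union_inN _ _ _ _ hp w
  have hdisjoint : w ∈ T.inN (p k) → w ∉ T.outN (p k) := T.asymm _ _
  grind

theorem IsLight.colorableOn_univ_of_three_lt_length (hT : T.IsLight) (hX : T.IsTriangle X)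
    (hY : T.IsTriangle Y) (hXout : T.IsTransitiveSet (T.commonOut X))
    (hYin : T.IsTransitiveSet (T.commonIn Y)) (hp : T.IsShortestPath p k) (hk : 3 < k)
    (hpX : p 0 ∈ X) (hpY : p k ∈ Y) : T.ColorableOn Set.univ 8 := by
  have hout : T.ColorableOn (T.inN (p 0))ᶜ 3 :=
    (hXout.colorableOn_one.union (hT.colorableOn_compl_inN_diff_commonOut hX hpX)).mono
      (by grind) le_rfl
  have hin : T.ColorableOn (T.inN (p k)) 3 :=
    (hYin.colorableOn_one.union (hT.colorableOn_compl_outN_diff_commonIn hY hpY)).mono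
      (fun w hw => or_iff_not_imp_left.mpr fun hwY => ⟨T.asymm _ _ hw, hwY⟩) le_rfl
  have hcolor := (hout.union_of_not_arc hin (hp.not_arc_of_three_lt hk)).union
    (hT.colorableOn_biUnion_arcNbhd_five hp)
  refine hcolor.mono (fun w _ => ?_) le_rfl
  have hcover := @inN_subset_biUnion_arcNbhd_union_inN _ _ _ _ hp.1 w
  grind

theorem IsLight.colorableOn_univ_of_isStrong [Finite V] (hT : T.IsLight) (hstrong : T.IsStrong) :
    T.ColorableOn Set.univ 8 := by
  by_cases htrans : T.IsTransitiveSet Set.univ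
  · exact htrans.colorableOn_one.mono subset_rfl (by lia)
  obtain ⟨Z, -, hZ⟩ := not_isTransitiveSet_iff.mp htrans
  obtain ⟨X, hX, hXout⟩ := hT.exists_isTriangle_isTransitiveSet_commonOut hZ
  obtain ⟨Y, hY, hYin⟩ := hT.exists_isTriangle_isTransitiveSet_commonIn hZ
  by_cases hXY : ∃ u ∈ T.commonOut X, ∃ v ∈ T.commonIn Y, T.arc u v
  · obtain ⟨u, hu, v, hv, huv⟩ := hXY
    exact hT.colorableOn_univ_of_arc_commonOut_commonIn hX hY hXout hYin hu hv huv
  push Not at hXY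
  obtain ⟨a, ha⟩ := hX.nonempty
  obtain ⟨b, hb⟩ := hY.nonempty
  obtain ⟨k, p, rfl, rfl, hp⟩ := exists_isShortestPath_of_reflTransGen (hstrong a b)
  rcases le_or_gt k 3 with hk | hk
  · exact hT.colorableOn_univ_of_length_le_three hX hY hXout hYin hXY hp.1 hk ha hb
  · exact hT.colorableOn_univ_of_three_lt_length hX hY hXout hYin hp hk ha hb

end EightColoring

end Tournament

theorem stmt_10 {V : Type} [Fintype V] (T : Tournament V) (hlight : T.IsLight) :
    T.ColorableOn Set.univ 8 :=
  Tournament.colorableOn_of_forall_induce_isStrong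
    (fun S hS => (hlight.induce S).colorableOn_univ_of_isStrong hS) Set.univ
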